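/- arXiv:2605.30493 — 2 statements merged into one kernel-verified Lean document; each statement's English description precedes it below -/
import Mathlib

section
/- (Corollary 1) Let δ_e^max := max(δ_e^1, δ_e^2) and δ_m^max := max(δ_m^1, δ_m^2). Under the relaxed assumptions with parameters δ_m^1, δ_m^2, δ_e^1, δ_e^2 ≥ 0, the mean markup satisfies max{0, max_{j∈{1,2}} (E[θ̂^j/α^j] − δ_e^max·E[1/α^j] − δ_m^max)} ≤ E[μ] ≤ min_{j∈{1,2}} (E[θ̂^j/α^j] + δ_e^max·E[1/α^j] + δ_m^max). -/
open MeasureTheory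

/-! Replacing `θ` by its estimate `θhat` moves the ratio `θ / α` by at most `δe / α`, so the
triangle inequality puts the markup within `δe / α + δm` of the estimated ratio almost everywhere,
and integrating puts the means within the integral of that radius. Enlarging the tolerances to
common ones only widens the interval obtained from each input; the mean lies in all of them. -/

theorem abs_sub_div_le_of_abs_sub_le {𝕜 : Type*} [Field 𝕜] [LinearOrder 𝕜] [IsStrictOrderedRing 𝕜]
    {m t t' a ε δ : 𝕜} (ha : 0 < a) (hm : |m - t / a| ≤ δ) (ht : |t - t'| ≤ ε) :
    |m - t' / a| ≤ ε * (1 / a) + δ :=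
  calc
    |m - t' / a| ≤ |m - t / a| + |t / a - t' / a| := abs_sub_le _ _ _
    _ = |m - t / a| + |t - t'| * (1 / a) := by
      rw [← sub_div, abs_div, abs_of_pos ha, mul_one_div]
    _ ≤ δ + ε * (1 / a) := by gcongr
    _ = ε * (1 / a) + δ := add_comm _ _

theorem range_fin_two {β : Type*} (f : Fin 2 → β) : Set.range f = {f 0, f 1} := by
  ext b
  simp only [Set.mem_range, Fin.exists_fin_two, Set.mem_insert_iff, Set.mem_singleton_iff, eq_comm]

theorem ciSup_fin_two {β : Type*} [ConditionallyCompleteLattice β] (f : Fin 2 → β) :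
    ⨆ j, f j = f 0 ⊔ f 1 := by
  rw [iSup, range_fin_two, csSup_pair]

theorem ciInf_fin_two {β : Type*} [ConditionallyCompleteLattice β] (f : Fin 2 → β) :
    ⨅ j, f j = f 0 ⊓ f 1 :=
  ciSup_fin_two (β := βᵒᵈ) f

/-- The relaxed assumptions for a single input with revenue share `α` and estimated output
elasticity `θhat`: some true elasticity `θ` has ratio `θ / α` within `δm` of the markup `μ` and is
itself within `δe` of `θhat`, almost everywhere. -/
def RelaxedAssumptions {Ω : Type*} [MeasurableSpace Ω] (P : Measure Ω) (μ α θhat : Ω → ℝ)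
    (δm δe : ℝ) : Prop :=
  ∃ θ : Ω → ℝ, Measurable θ ∧
    (∀ᵐ ω ∂P, |μ ω - θ ω / α ω| ≤ δm) ∧ (∀ᵐ ω ∂P, |θ ω - θhat ω| ≤ δe)

namespace RelaxedAssumptions

variable {Ω : Type*} [MeasurableSpace Ω] {P : Measure Ω} {μ α θhat : Ω → ℝ} {δm δe : ℝ}

theorem mono {δm' δe' : ℝ} (h : RelaxedAssumptions P μ α θhat δm δe) (hm : δm ≤ δm')
    (he : δe ≤ δe') : RelaxedAssumptions P μ α θhat δm' δe' := by
  obtain ⟨θ, hθ, hmarkup, helasticity⟩ := h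
  exact ⟨θ, hθ, hmarkup.mono fun _ hω => hω.trans hm, helasticity.mono fun _ hω => hω.trans he⟩

theorem ae_abs_sub_le (h : RelaxedAssumptions P μ α θhat δm δe) (hα : ∀ᵐ ω ∂P, 0 < α ω) :
    ∀ᵐ ω ∂P, |μ ω - θhat ω / α ω| ≤ δe * (1 / α ω) + δm := by
  obtain ⟨θ, -, hmarkup, helasticity⟩ := h
  filter_upwards [hα, hmarkup, helasticity] with ω
  exact abs_sub_div_le_of_abs_sub_le

theorem abs_integral_sub_integral_le [IsFiniteMeasure P]
    (h : RelaxedAssumptions P μ α θhat δm δe) (hα : ∀ᵐ ω ∂P, 0 < α ω) (hμ : Integrable μ P)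
    (hratio : Integrable (fun ω => θhat ω / α ω) P) (hinv : Integrable (fun ω => 1 / α ω) P) :
    |(∫ ω, μ ω ∂P) - ∫ ω, θhat ω / α ω ∂P| ≤ δe * (∫ ω, 1 / α ω ∂P) + δm * P.real Set.univ := by
  have hradius : Integrable (fun ω => δe * (1 / α ω)) P := hinv.const_mul δe
  calc
    |(∫ ω, μ ω ∂P) - ∫ ω, θhat ω / α ω ∂P| = |∫ ω, (μ ω - θhat ω / α ω) ∂P| := by
      rw [integral_sub hμ hratio]
    _ ≤ ∫ ω, (δe * (1 / α ω) + δm) ∂P := by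
      rw [← Real.norm_eq_abs]
      exact norm_integral_le_of_norm_le (hradius.fun_add (integrable_const δm)) (h.ae_abs_sub_le hα)
    _ = δe * (∫ ω, 1 / α ω ∂P) + δm * P.real Set.univ := by
      rw [integral_add hradius (integrable_const δm), integral_const_mul, integral_const,
        smul_eq_mul, mul_comm δm]

end RelaxedAssumptions

theorem stmt_2_general {Ω ι : Type*} [MeasurableSpace Ω] [Nonempty ι] (P : Measure Ω)
    [IsFiniteMeasure P] (μ : Ω → ℝ) (α θhat : ι → Ω → ℝ) (δm δe : ι → ℝ)
    (hαpos : ∀ j, ∀ᵐ ω ∂P, 0 < α j ω) (hμnonneg : ∀ᵐ ω ∂P, 0 ≤ μ ω)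
    (hδm : BddAbove (Set.range δm)) (hδe : BddAbove (Set.range δe))
    (hrelax : ∀ j, RelaxedAssumptions P μ (α j) (θhat j) (δm j) (δe j))
    (hμint : Integrable μ P)
    (hratioint : ∀ j, Integrable (fun ω => θhat j ω / α j ω) P)
    (hinvint : ∀ j, Integrable (fun ω => 1 / α j ω) P) :
    max 0 (⨆ j, ((∫ ω, θhat j ω / α j ω ∂P) - (⨆ i, δe i) * (∫ ω, 1 / α j ω ∂P)
        - (⨆ i, δm i) * P.real Set.univ)) ≤ ∫ ω, μ ω ∂P ∧
    (∫ ω, μ ω ∂P) ≤ ⨅ j, ((∫ ω, θhat j ω / α j ω ∂P) + (⨆ i, δe i) * (∫ ω, 1 / α j ω ∂P)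
        + (⨆ i, δm i) * P.real Set.univ) := by
  have hdist : ∀ j, |(∫ ω, μ ω ∂P) - ∫ ω, θhat j ω / α j ω ∂P|
      ≤ (⨆ i, δe i) * (∫ ω, 1 / α j ω ∂P) + (⨆ i, δm i) * P.real Set.univ := fun j =>
    ((hrelax j).mono (le_ciSup hδm j) (le_ciSup hδe j)).abs_integral_sub_integral_le
      (hαpos j) hμint (hratioint j) (hinvint j)
  refine ⟨max_le (integral_nonneg_of_ae hμnonneg) (ciSup_le fun j => ?_), le_ciInf fun j => ?_⟩
  · linarith [(abs_le.mp (hdist j)).1]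
  · linarith [(abs_le.mp (hdist j)).2]

/-- Corollary 1: partial identification of the average markup using the uniform
relaxation parameters `δ_e^max = max(δ_e^1, δ_e^2)` and
`δ_m^max = max(δ_m^1, δ_m^2)`. -/
theorem stmt_2 {Ω : Type*} [MeasurableSpace Ω] (P : Measure Ω) [IsProbabilityMeasure P]
    (μ : Ω → ℝ) (α θhat : Fin 2 → Ω → ℝ) (δm δe : Fin 2 → ℝ)
    (hμmeas : Measurable μ) (hαmeas : ∀ j, Measurable (α j))
    (hθhatmeas : ∀ j, Measurable (θhat j))
    (hαpos : ∀ j, ∀ᵐ ω ∂P, 0 < α j ω)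
    (hμnonneg : ∀ᵐ ω ∂P, 0 ≤ μ ω)
    (hδm : ∀ j, 0 ≤ δm j) (hδe : ∀ j, 0 ≤ δe j)
    (hrelax : ∀ j, ∃ θ : Ω → ℝ, Measurable θ ∧
      (∀ᵐ ω ∂P, |μ ω - θ ω / α j ω| ≤ δm j) ∧
      (∀ᵐ ω ∂P, |θ ω - θhat j ω| ≤ δe j))
    (hμint : Integrable μ P)
    (hratioint : ∀ j, Integrable (fun ω => θhat j ω / α j ω) P)
    (hinvint : ∀ j, Integrable (fun ω => 1 / α j ω) P) :
    max 0 (max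
        ((∫ ω, θhat 0 ω / α 0 ω ∂P) - max (δe 0) (δe 1) * (∫ ω, 1 / α 0 ω ∂P)
          - max (δm 0) (δm 1))
        ((∫ ω, θhat 1 ω / α 1 ω ∂P) - max (δe 0) (δe 1) * (∫ ω, 1 / α 1 ω ∂P)
          - max (δm 0) (δm 1)))
      ≤ ∫ ω, μ ω ∂P ∧
    (∫ ω, μ ω ∂P) ≤ min
        ((∫ ω, θhat 0 ω / α 0 ω ∂P) + max (δe 0) (δe 1) * (∫ ω, 1 / α 0 ω ∂P)
          + max (δm 0) (δm 1))
        ((∫ ω, θhat 1 ω / α 1 ω ∂P) + max (δe 0) (δe 1) * (∫ ω, 1 / α 1 ω ∂P)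
          + max (δm 0) (δm 1)) := by
  simpa only [ciSup_fin_two, ciInf_fin_two, probReal_univ, mul_one] using
    stmt_2_general P μ α θhat δm δe hαpos hμnonneg (Set.finite_range δm).bddAbove
      (Set.finite_range δe).bddAbove hrelax hμint hratioint hinvint
end

section
/- (Proposition 1, finitely many variable inputs) Let J be a nonempty finite index set of variable inputs. Under the relaxed assumptions with parameters δ_m^j, δ_e^j ≥ 0 for every j ∈ J, the mean markup satisfies max{0, max_{j∈J} (E[θ̂^j/α^j] − δ_e^j·E[1/α^j] − δ_m^j)} ≤ E[μ] ≤ min_{j∈J} (E[θ̂^j/α^j] + δ_e^j·E[1/α^j] + δ_m^j). -/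
open MeasureTheory

theorem abs_sub_div_le_div_abs_add {K : Type*} [Field K] [LinearOrder K] [IsStrictOrderedRing K]
    {m a s t d e : K} (hm : |m - t / a| ≤ d) (he : |t - s| ≤ e) :
    |m - s / a| ≤ e / |a| + d := by
  have he' : |t / a - s / a| ≤ e / |a| := by
    rw [← sub_div, abs_div]
    gcongr
  calc |m - s / a| ≤ |m - t / a| + |t / a - s / a| := abs_sub_le _ _ _
    _ ≤ d + e / |a| := add_le_add hm he'
    _ = e / |a| + d := add_comm _ _

theorem abs_integral_sub_integral_div_le {Ω : Type*} [MeasurableSpace Ω] {P : Measure Ω}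
    [IsFiniteMeasure P] {μ α θ θhat : Ω → ℝ} {δm δe : ℝ}
    (hα : ∀ᵐ ω ∂P, 0 < α ω)
    (hm : ∀ᵐ ω ∂P, |μ ω - θ ω / α ω| ≤ δm) (he : ∀ᵐ ω ∂P, |θ ω - θhat ω| ≤ δe)
    (hμint : Integrable μ P) (hratioint : Integrable (fun ω => θhat ω / α ω) P)
    (hinvint : Integrable (fun ω => 1 / α ω) P) :
    |(∫ ω, μ ω ∂P) - ∫ ω, θhat ω / α ω ∂P|
      ≤ δe * (∫ ω, 1 / α ω ∂P) + δm * P.real Set.univ := by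
  have hbound : ∀ᵐ ω ∂P, |μ ω - θhat ω / α ω| ≤ δe * (1 / α ω) + δm := by
    filter_upwards [hα, hm, he] with ω hα hm he
    simpa only [abs_of_pos hα, div_eq_mul_one_div δe] using abs_sub_div_le_div_abs_add hm he
  have hinvint' : Integrable (fun ω => δe * (1 / α ω)) P := hinvint.const_mul δe
  have hboundint : Integrable (fun ω => δe * (1 / α ω) + δm) P :=
    hinvint'.add (integrable_const δm)
  calc |(∫ ω, μ ω ∂P) - ∫ ω, θhat ω / α ω ∂P|
      = |∫ ω, (μ ω - θhat ω / α ω) ∂P| := by rw [integral_sub hμint hratioint]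
    _ ≤ ∫ ω, (δe * (1 / α ω) + δm) ∂P :=
        abs_integral_le_integral_abs.trans
          (integral_mono_ae (hμint.sub hratioint).abs hboundint hbound)
    _ = δe * (∫ ω, 1 / α ω ∂P) + δm * P.real Set.univ := by
        rw [integral_add hinvint' (integrable_const δm), integral_const_mul, integral_const,
          smul_eq_mul, mul_comm δm]

/-- The families under `⨆` and `⨅` are bounded, by `∫ ω, μ ω ∂P` itself, so neither takes its junk
value. -/
theorem stmt_3_general {Ω : Type*} [MeasurableSpace Ω] (P : Measure Ω) [IsFiniteMeasure P]
    {J : Type*} [Nonempty J] (μ : Ω → ℝ) (α θhat : J → Ω → ℝ) (δm δe : J → ℝ)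
    (hαpos : ∀ j, ∀ᵐ ω ∂P, 0 < α j ω) (hμnonneg : ∀ᵐ ω ∂P, 0 ≤ μ ω)
    (hrelax : ∀ j, ∃ θ : Ω → ℝ,
      (∀ᵐ ω ∂P, |μ ω - θ ω / α j ω| ≤ δm j) ∧ (∀ᵐ ω ∂P, |θ ω - θhat j ω| ≤ δe j))
    (hμint : Integrable μ P)
    (hratioint : ∀ j, Integrable (fun ω => θhat j ω / α j ω) P)
    (hinvint : ∀ j, Integrable (fun ω => 1 / α j ω) P) :
    max 0 (⨆ j, ((∫ ω, θhat j ω / α j ω ∂P) - δe j * (∫ ω, 1 / α j ω ∂P)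
        - δm j * P.real Set.univ)) ≤ ∫ ω, μ ω ∂P ∧
    (∫ ω, μ ω ∂P) ≤ ⨅ j, ((∫ ω, θhat j ω / α j ω ∂P) + δe j * (∫ ω, 1 / α j ω ∂P)
        + δm j * P.real Set.univ) := by
  have hdist (j : J) : |(∫ ω, μ ω ∂P) - ∫ ω, θhat j ω / α j ω ∂P|
      ≤ δe j * (∫ ω, 1 / α j ω ∂P) + δm j * P.real Set.univ := by
    obtain ⟨θ, hm, he⟩ := hrelax j
    exact abs_integral_sub_integral_div_le (hαpos j) hm he hμint (hratioint j) (hinvint j)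
  refine ⟨max_le (integral_nonneg_of_ae hμnonneg) (ciSup_le fun j => ?_), le_ciInf fun j => ?_⟩
  · linarith [(abs_le.mp (hdist j)).1]
  · linarith [(abs_le.mp (hdist j)).2]

/-- Proposition 1 with finitely many variable inputs indexed by a nonempty
finite type `J`. -/
theorem stmt_3 {Ω : Type*} [MeasurableSpace Ω] (P : Measure Ω) [IsProbabilityMeasure P]
    {J : Type*} [Fintype J] [Nonempty J]
    (μ : Ω → ℝ) (α θhat : J → Ω → ℝ) (δm δe : J → ℝ)
    (hμmeas : Measurable μ) (hαmeas : ∀ j, Measurable (α j))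
    (hθhatmeas : ∀ j, Measurable (θhat j))
    (hαpos : ∀ j, ∀ᵐ ω ∂P, 0 < α j ω)
    (hμnonneg : ∀ᵐ ω ∂P, 0 ≤ μ ω)
    (hδm : ∀ j, 0 ≤ δm j) (hδe : ∀ j, 0 ≤ δe j)
    (hrelax : ∀ j, ∃ θ : Ω → ℝ, Measurable θ ∧
      (∀ᵐ ω ∂P, |μ ω - θ ω / α j ω| ≤ δm j) ∧
      (∀ᵐ ω ∂P, |θ ω - θhat j ω| ≤ δe j))
    (hμint : Integrable μ P)
    (hratioint : ∀ j, Integrable (fun ω => θhat j ω / α j ω) P)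
    (hinvint : ∀ j, Integrable (fun ω => 1 / α j ω) P) :
    max 0 (Finset.univ.sup' Finset.univ_nonempty (fun j =>
        (∫ ω, θhat j ω / α j ω ∂P) - δe j * (∫ ω, 1 / α j ω ∂P) - δm j))
      ≤ ∫ ω, μ ω ∂P ∧
    (∫ ω, μ ω ∂P) ≤ Finset.univ.inf' Finset.univ_nonempty (fun j =>
        (∫ ω, θhat j ω / α j ω ∂P) + δe j * (∫ ω, 1 / α j ω ∂P) + δm j) := by
  simpa only [Finset.sup'_univ_eq_ciSup, Finset.inf'_univ_eq_ciInf, probReal_univ, mul_one] using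
    stmt_3_general P μ α θhat δm δe hαpos hμnonneg
      (fun j => (hrelax j).imp fun _ h => h.2) hμint hratioint hinvint
end
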